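/- For n ≥ 2, the number of bicolored Motzkin paths of length n satisfying both restrictions (no umber horizontal step at height zero, no denim horizontal step before the first down step) equals the number of 321-avoiding permutations of [n-1]. -/

import Mathlib

inductive BStep : Type
  | U | D | Hu | Hd
deriving DecidableEq

def BStep.h : BStep → ℤ
  | .U => 1
  | .D => -1
  | .Hu => 0
  | .Hd => 0

/-- The height reached by a path (list of steps). -/
def hsum (p : List BStep) : ℤ := (p.map BStep.h).sum

/-- The path never goes below the x-axis. -/
def NonNegPath (p : List BStep) : Prop := ∀ k : ℕ, 0 ≤ hsum (p.take k)

/-- Restriction (1): no umber horizontal step occurs at height zero. -/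
def Res1 (p : List BStep) : Prop :=
  ∀ (i : ℕ) (hi : i < p.length), p.get ⟨i, hi⟩ = BStep.Hu → 0 < hsum (p.take i)

/-- Restriction (2): no denim horizontal step occurs before the first down step. -/
def Res2 (p : List BStep) : Prop :=
  ∀ (i : ℕ) (hi : i < p.length), p.get ⟨i, hi⟩ = BStep.Hd →
    ∃ (j : ℕ) (hj : j < p.length), j < i ∧ p.get ⟨j, hj⟩ = BStep.D

/-- A bicolored Motzkin path of length `n`: from (0,0) to (n,0), never below the x-axis. -/
def IsBMotzkin (n : ℕ) (p : List BStep) : Prop :=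
  p.length = n ∧ hsum p = 0 ∧ NonNegPath p

/-- A permutation is 321-avoiding if it has no decreasing subsequence of length 3. -/
def Avoids321 {n : ℕ} (π : Equiv.Perm (Fin n)) : Prop :=
  ¬ ∃ i j k : Fin n, i < j ∧ j < k ∧ π k < π j ∧ π j < π i

/-- `π i` is a right-to-left minimum of `π`. -/
def IsRLMin {n : ℕ} (π : Equiv.Perm (Fin n)) (i : Fin n) : Prop :=
  ∀ j : Fin n, i < j → π i < π j

/-- The number of nonnegative paths with `L` steps `±1` from height `k` to height `0`. -/
def ballot : ℕ → ℕ → ℕ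
  | 0, 0 => 1
  | 0, _ + 1 => 0
  | L + 1, 0 => ballot L 1
  | L + 1, k + 1 => ballot L k + ballot L (k + 2)

theorem ballot_eq_zero_of_lt : ∀ {L k : ℕ}, L < k → ballot L k = 0
  | 0, 0, h => by omega
  | 0, _ + 1, _ => rfl
  | _ + 1, 0, h => by omega
  | L + 1, k + 1, h => by
    rw [ballot, ballot_eq_zero_of_lt (by omega), ballot_eq_zero_of_lt (by omega)]

theorem ballot_self : ∀ k : ℕ, ballot k k = 1
  | 0 => rfl
  | k + 1 => by rw [ballot, ballot_self k, ballot_eq_zero_of_lt (by omega)]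

theorem ballot_add_two_zero (L : ℕ) : ballot (L + 2) 0 = ballot L 0 + ballot L 2 := rfl

theorem ballot_add_two_add_two (L k : ℕ) :
    ballot (L + 2) (k + 2) =
      ballot L k + ballot L (k + 2) + (ballot L (k + 2) + ballot L (k + 4)) := rfl

/-! ### Counting paths -/

instance : Fintype BStep where
  elems := {.U, .D, .Hu, .Hd}
  complete := by rintro (_ | _ | _ | _) <;> decide

theorem BStep.sum_eq (f : BStep → ℕ) : ∑ c, f c = f .U + f .D + f .Hu + f .Hd := by
  change ∑ c ∈ ({.U, .D, .Hu, .Hd} : Finset BStep), f c = _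
  simp [add_assoc]

/-- The number of lists of steps of length `n` satisfying `Q`. -/
noncomputable def countPaths (n : ℕ) (Q : List BStep → Prop) : ℕ :=
  Nat.card {p : List BStep // p.length = n ∧ Q p}

theorem countPaths_eq_zero {n : ℕ} {Q : List BStep → Prop} (h : ∀ p, ¬ Q p) :
    countPaths n Q = 0 := by
  have : IsEmpty {p : List BStep // p.length = n ∧ Q p} := ⟨fun p => h _ p.2.2⟩
  exact Nat.card_of_isEmpty

theorem countPaths_zero_of_nil {Q : List BStep → Prop} (h : Q []) : countPaths 0 Q = 1 := by
  refine Nat.card_eq_one_iff_unique.2 ⟨⟨fun p q => Subtype.ext ?_⟩, ⟨⟨[], rfl, h⟩⟩⟩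
  rw [List.length_eq_zero_iff.1 p.2.1, List.length_eq_zero_iff.1 q.2.1]

theorem countPaths_zero_of_not_nil {Q : List BStep → Prop} (h : ¬ Q []) :
    countPaths 0 Q = 0 := by
  have : IsEmpty {p : List BStep // p.length = 0 ∧ Q p} :=
    ⟨fun p => h (List.length_eq_zero_iff.1 p.2.1 ▸ p.2.2)⟩
  exact Nat.card_of_isEmpty

theorem countPaths_succ (n : ℕ) (Q : List BStep → Prop) :
    countPaths (n + 1) Q = ∑ c, countPaths n fun p => Q (c :: p) := by
  have (c : BStep) : Finite {p : List BStep // p.length = n ∧ Q (c :: p)} :=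
    ((List.finite_length_eq BStep n).subset fun _ hp => hp.1).to_subtype
  unfold countPaths
  rw [← Nat.card_sigma]
  refine (Nat.card_eq_of_bijective
    (fun x : Σ c, {p : List BStep // p.length = n ∧ Q (c :: p)} =>
      (⟨x.1 :: x.2.1, by simpa using x.2.2.1, x.2.2.2⟩ :
        {p : List BStep // p.length = n + 1 ∧ Q p})) ⟨?_, ?_⟩).symm
  · rintro ⟨c, p, hp⟩ ⟨d, q, hq⟩ h
    obtain ⟨rfl, rfl⟩ := List.cons.inj (Subtype.ext_iff.1 h)
    rfl
  · rintro ⟨_ | ⟨c, p⟩, hp, hQ⟩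
    · simp at hp
    · exact ⟨⟨c, p, by simpa using hp, hQ⟩, rfl⟩

/-- Admissible continuations from height `h`; `s` says whether a down step has already occurred. -/
def IsTail (s : Prop) (h : ℤ) (p : List BStep) : Prop :=
  h + hsum p = 0 ∧ (∀ k : ℕ, 0 ≤ h + hsum (p.take k)) ∧
    (∀ i (hi : i < p.length), p[i] = BStep.Hu → 0 < h + hsum (p.take i)) ∧
    ∀ i (hi : i < p.length), p[i] = BStep.Hd →
      s ∨ ∃ (j : ℕ) (hj : j < p.length), j < i ∧ p[j] = BStep.D

theorem isTail_false_zero_iff (n : ℕ) (p : List BStep) :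
    IsBMotzkin n p ∧ Res1 p ∧ Res2 p ↔ p.length = n ∧ IsTail False 0 p := by
  simp [IsBMotzkin, Res1, Res2, IsTail, NonNegPath, and_assoc]

theorem forall_nat_iff {P : ℕ → Prop} : (∀ k, P k) ↔ P 0 ∧ ∀ k, P (k + 1) :=
  ⟨fun h => ⟨h 0, fun k => h _⟩, fun h k => by cases k; exacts [h.1, h.2 _]⟩

theorem exists_nat_iff {P : ℕ → Prop} : (∃ k, P k) ↔ P 0 ∨ ∃ k, P (k + 1) :=
  ⟨fun ⟨k, h⟩ => by cases k; exacts [.inl h, .inr ⟨_, h⟩],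
    fun h => h.elim (⟨_, ·⟩) fun ⟨_, h⟩ => ⟨_, h⟩⟩

theorem hsum_nil : hsum [] = 0 := rfl

theorem hsum_cons (c : BStep) (p : List BStep) : hsum (c :: p) = c.h + hsum p := by
  simp [hsum]

theorem isTail_nil (s : Prop) (h : ℤ) : IsTail s h [] ↔ h = 0 := by
  simp +contextual [IsTail, hsum_nil]

theorem IsTail.nonneg {s : Prop} {h : ℤ} {p : List BStep} (hp : IsTail s h p) : 0 ≤ h := by
  simpa [hsum_nil] using hp.2.1 0

theorem isTail_cons (s : Prop) (h : ℤ) (c : BStep) (p : List BStep) :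
    IsTail s h (c :: p) ↔ 0 ≤ h ∧ (c = .Hu → 0 < h) ∧ (c = .Hd → s) ∧
      IsTail (s ∨ c = .D) (h + c.h) p := by
  unfold IsTail
  rw [forall_nat_iff, forall_nat_iff (P := fun i => ∀ _ : i < (c :: p).length, _ → 0 < _),
    forall_nat_iff (P := fun i => ∀ _ : i < (c :: p).length, _ → (s ∨ _))]
  simp only [exists_nat_iff (P := fun j => ∃ _ : j < (c :: p).length, _)]
  simp [hsum_cons, hsum_nil, add_assoc, or_assoc]
  tauto

theorem countPaths_isTail_zero (s : Prop) (h : ℕ) :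
    countPaths 0 (IsTail s h) = ballot 0 h := by
  cases h with
  | zero => exact countPaths_zero_of_nil ((isTail_nil s _).2 rfl)
  | succ h => exact countPaths_zero_of_not_nil fun hp =>
      Int.natCast_ne_zero.2 h.succ_ne_zero ((isTail_nil s _).1 hp)

theorem countPaths_isTail_succ_succ (s : Prop) (n h : ℕ) :
    countPaths (n + 1) (IsTail s (h + 1 : ℕ)) =
      countPaths n (IsTail s (h + 2 : ℕ)) + countPaths n (IsTail True h) +
        countPaths n (IsTail s (h + 1 : ℕ)) +
        countPaths n (fun p => s ∧ IsTail s (h + 1 : ℕ) p) := by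
  rw [countPaths_succ, BStep.sum_eq]
  have e₁ : (h : ℤ) + 1 + 1 = h + 2 := by ring
  have e₂ : (0 : ℤ) ≤ h + 1 := by omega
  have e₃ : (0 : ℤ) < h + 1 := by omega
  simp [isTail_cons, BStep.h, e₁, e₂, e₃]

theorem countPaths_isTail_succ_zero (s : Prop) (n : ℕ) :
    countPaths (n + 1) (IsTail s (0 : ℕ)) =
      countPaths n (IsTail s (1 : ℕ)) + countPaths n (fun p => s ∧ IsTail s (0 : ℕ) p) := by
  rw [countPaths_succ, BStep.sum_eq]
  have hD : countPaths n (fun p => IsTail s (0 : ℕ) (.D :: p)) = 0 :=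
    countPaths_eq_zero fun p hp => by
    have := ((isTail_cons _ _ _ _).1 hp).2.2.2.nonneg
    simp [BStep.h] at this
  have hHu : countPaths n (fun p => IsTail s (0 : ℕ) (.Hu :: p)) = 0 :=
    countPaths_eq_zero fun p hp => by
    have := ((isTail_cons _ _ _ _).1 hp).2.1 rfl
    simp at this
  rw [hD, hHu]
  simp [isTail_cons, BStep.h]

theorem countPaths_isTail_true : ∀ n h : ℕ,
    countPaths n (IsTail True h) = ballot (2 * n) (2 * h)
  | 0, h => by
    rw [countPaths_isTail_zero]
    cases h <;> rfl
  | n + 1, 0 => by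
    rw [countPaths_isTail_succ_zero]
    simp only [true_and]
    rw [countPaths_isTail_true n 1, countPaths_isTail_true n 0, mul_add_one, mul_zero,
      ballot_add_two_zero, add_comm]
  | n + 1, h + 1 => by
    rw [countPaths_isTail_succ_succ]
    simp only [true_and]
    rw [countPaths_isTail_true n (h + 2), countPaths_isTail_true n h,
      countPaths_isTail_true n (h + 1), mul_add_one 2 n, mul_add_one 2 h,
      ballot_add_two_add_two, show 2 * (h + 2) = 2 * h + 4 by ring]
    ring

theorem countPaths_isTail_false : ∀ n h : ℕ,
    countPaths (n + 1) (IsTail False (h + 1 : ℕ)) = ballot (2 * n + 1) (2 * h + 1)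
  | 0, h => by
    rw [countPaths_isTail_succ_succ, countPaths_isTail_zero, countPaths_isTail_zero,
      countPaths_isTail_zero, countPaths_eq_zero (by simp)]
    cases h <;> rfl
  | n + 1, h => by
    rw [countPaths_isTail_succ_succ, countPaths_isTail_false n (h + 1),
      countPaths_isTail_false n h, countPaths_isTail_true, countPaths_eq_zero (by simp),
      show ballot (2 * (n + 1) + 1) (2 * h + 1) = ballot (2 * (n + 1)) (2 * h) +
        (ballot (2 * n + 1) (2 * h + 1) + ballot (2 * n + 1) (2 * (h + 1) + 1)) from rfl]
    ring

theorem card_restricted_motzkin (m : ℕ) :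
    Nat.card {p : List BStep // IsBMotzkin (m + 2) p ∧ Res1 p ∧ Res2 p} =
      ballot (2 * (m + 1)) 0 := by
  simp only [isTail_false_zero_iff]
  change countPaths (m + 1 + 1) (IsTail False (0 : ℕ)) = _
  rw [countPaths_isTail_succ_zero, countPaths_isTail_false m 0, countPaths_eq_zero (by simp)]
  rfl

/-! ### Counting permutations -/

/-- The permutation with first value `a` whose remaining values are order isomorphic to `σ`. -/
def consPerm {m : ℕ} (a : Fin (m + 1)) (σ : Equiv.Perm (Fin m)) : Equiv.Perm (Fin (m + 1)) :=
  (finSuccEquiv' 0).trans ((Equiv.optionCongr σ).trans (finSuccEquiv' a).symm)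

theorem consPerm_zero {m : ℕ} (a : Fin (m + 1)) (σ : Equiv.Perm (Fin m)) :
    consPerm a σ 0 = a := by
  simp [consPerm]

theorem consPerm_succ {m : ℕ} (a : Fin (m + 1)) (σ : Equiv.Perm (Fin m)) (i : Fin m) :
    consPerm a σ i.succ = a.succAbove (σ i) := by
  simp [consPerm, finSuccEquiv'_zero]

theorem consPerm_bijective (m : ℕ) :
    Function.Bijective fun x : (_ : Fin (m + 1)) × Equiv.Perm (Fin m) => consPerm x.1 x.2 := by
  rw [Fintype.bijective_iff_injective_and_card]
  constructor
  · rintro ⟨a, σ⟩ ⟨b, τ⟩ h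
    replace h : consPerm a σ = consPerm b τ := h
    obtain rfl : a = b := by rw [← consPerm_zero a σ, h, consPerm_zero]
    congr 1
    ext i
    have := congrArg (· i.succ) h
    simp only [consPerm_succ] at this
    rw [Fin.succAbove_right_injective this]
  · simp [Fintype.card_perm, Nat.factorial_succ]

/-- The values less than `b` occur in increasing order in `σ`. -/
def IncreasingBelow {m : ℕ} (b : ℕ) (σ : Equiv.Perm (Fin m)) : Prop :=
  ∀ i j, i < j → σ j < σ i → b ≤ (σ i : ℕ)

theorem succAbove_lt_self_iff {m : ℕ} (a : Fin (m + 1)) (x : Fin m) :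
    a.succAbove x < a ↔ (x : ℕ) < a := by
  rw [Fin.succAbove_lt_iff_castSucc_lt, Fin.lt_def, Fin.val_castSucc]

theorem avoids321_consPerm {m : ℕ} (a : Fin (m + 1)) (σ : Equiv.Perm (Fin m)) :
    Avoids321 (consPerm a σ) ↔ Avoids321 σ ∧ IncreasingBelow a σ := by
  unfold Avoids321 IncreasingBelow
  simp only [Fin.exists_fin_succ, consPerm_zero, consPerm_succ, succAbove_lt_self_iff,
    Fin.succAbove_lt_succAbove_iff, Fin.succ_lt_succ_iff, Fin.succ_pos, Fin.not_lt_zero,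
    false_and, and_false, true_and, exists_false, false_or]
  rw [not_or, and_comm]
  push Not
  rfl

theorem increasingBelow_consPerm {m b : ℕ} (a : Fin (m + 1)) (σ : Equiv.Perm (Fin m))
    (hσ : IncreasingBelow a σ) :
    IncreasingBelow (b + 1) (consPerm a σ) ↔
      if a = 0 then IncreasingBelow b σ else b + 1 ≤ (a : ℕ) := by
  unfold IncreasingBelow
  simp only [Fin.forall_fin_succ, consPerm_zero, consPerm_succ, succAbove_lt_self_iff,
    Fin.succAbove_lt_succAbove_iff, Fin.succ_lt_succ_iff, Fin.succ_pos, Fin.not_lt_zero,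
    false_imp_iff, true_imp_iff, true_and]
  split_ifs with ha
  · subst ha
    simp
  · have h₀ : 0 < (a : ℕ) := Nat.pos_of_ne_zero fun h => ha (Fin.ext h)
    constructor
    · rintro ⟨h, -⟩
      have hm : 0 < m := by omega
      exact h (σ.symm ⟨0, hm⟩) (by simpa using h₀)
    · refine fun h => ⟨fun _ _ => h, fun i j hij hlt => ?_⟩
      have := hσ i j hij hlt
      rw [Fin.succAbove_of_le_castSucc _ _ (by simpa [Fin.le_def] using this), Fin.val_succ]
      omega

/-- The number of 321-avoiding permutations of `Fin m` whose values below `b` are increasing. -/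
noncomputable def countAvoids (m b : ℕ) : ℕ :=
  Nat.card {σ : Equiv.Perm (Fin m) // Avoids321 σ ∧ IncreasingBelow b σ}

theorem card_avoids321 (m : ℕ) :
    Nat.card {σ : Equiv.Perm (Fin m) // Avoids321 σ} = countAvoids m 0 := by
  simp [countAvoids, IncreasingBelow]

theorem card_perm_succ {m : ℕ} (Q : Equiv.Perm (Fin (m + 1)) → Prop) :
    Nat.card {π // Q π} = ∑ a, Nat.card {σ // Q (consPerm a σ)} := by
  rw [← Nat.card_sigma]
  refine (Nat.card_eq_of_bijective
    (fun x : Σ a, {σ // Q (consPerm a σ)} => (⟨consPerm x.1 x.2.1, x.2.2⟩ : {π // Q π}))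
    ⟨?_, ?_⟩).symm
  · rintro ⟨a, σ, hσ⟩ ⟨b, τ, hτ⟩ h
    cases (consPerm_bijective m).1 (a₁ := ⟨a, σ⟩) (a₂ := ⟨b, τ⟩) (Subtype.ext_iff.1 h)
    rfl
  · rintro ⟨π, hπ⟩
    obtain ⟨⟨a, σ⟩, rfl⟩ := (consPerm_bijective m).2 π
    exact ⟨⟨a, σ, hπ⟩, rfl⟩

theorem countAvoids_succ_succ (m b : ℕ) :
    countAvoids (m + 1) (b + 1) =
      countAvoids m b + ∑ a : Fin m, if b ≤ (a : ℕ) then countAvoids m (a + 1) else 0 := by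
  have key (a : Fin (m + 1)) (σ : Equiv.Perm (Fin m)) :
      (Avoids321 (consPerm a σ) ∧ IncreasingBelow (b + 1) (consPerm a σ)) ↔
        Avoids321 σ ∧ IncreasingBelow a σ ∧
          if a = 0 then IncreasingBelow b σ else b + 1 ≤ (a : ℕ) := by
    rw [avoids321_consPerm, and_assoc]
    exact and_congr_right fun _ => and_congr_right fun h => increasingBelow_consPerm a σ h
  unfold countAvoids
  rw [card_perm_succ, Fin.sum_univ_succ]
  simp only [key]
  congr 1
  · simp [IncreasingBelow]
  · refine Finset.sum_congr rfl fun a _ => ?_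
    simp only [Fin.succ_ne_zero, if_false, Fin.val_succ, Nat.add_le_add_iff_right]
    split_ifs with h <;> simp [h]

theorem countAvoids_zero_eq_one (m : ℕ) : countAvoids m 0 = countAvoids m 1 := by
  have h₀ (σ : Equiv.Perm (Fin m)) : IncreasingBelow 0 σ := fun _ _ _ _ => Nat.zero_le _
  have h₁ (σ : Equiv.Perm (Fin m)) : IncreasingBelow 1 σ := fun i j _ h =>
    Nat.one_le_iff_ne_zero.2 (Nat.ne_zero_of_lt h)
  simp [countAvoids, h₀, h₁]

theorem countAvoids_self (m : ℕ) : countAvoids m m = 1 := by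
  induction m with
  | zero => simp [countAvoids, Avoids321, IncreasingBelow]
  | succ m ih =>
    rw [countAvoids_succ_succ, ih, Finset.sum_eq_zero fun a _ => if_neg a.2.not_ge, add_zero]

theorem countAvoids_succ_of_lt {m b : ℕ} (h : b < m) :
    countAvoids (m + 1) (b + 1) = countAvoids m b + countAvoids (m + 1) (b + 2) := by
  rw [countAvoids_succ_succ, countAvoids_succ_succ m (b + 1)]
  congr 1
  have (a : Fin m) : (if b ≤ (a : ℕ) then countAvoids m (a + 1) else 0) =
      (if ⟨b, h⟩ = a then countAvoids m (a + 1) else 0) +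
        if b + 1 ≤ (a : ℕ) then countAvoids m (a + 1) else 0 := by
    simp only [Fin.ext_iff]
    split_ifs <;> omega
  simp only [this, Finset.sum_add_distrib, Finset.sum_ite_eq, Finset.mem_univ, if_true]

theorem countAvoids_add : ∀ r b : ℕ, countAvoids (b + r) b = ballot (b + 2 * r) b
  | 0, b => by simp [countAvoids_self, ballot_self]
  | r + 1, 0 => by
    rw [← add_assoc, countAvoids_zero_eq_one, zero_add, add_comm r 1, countAvoids_add r 1,
      show 0 + 2 * (1 + r) = 1 + 2 * r + 1 by ring, ballot]
  | r + 1, b + 1 => by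
    rw [show b + 1 + (r + 1) = b + (r + 1) + 1 by ring, countAvoids_succ_of_lt (by omega),
      countAvoids_add (r + 1) b, show b + (r + 1) + 1 = b + 2 + r by ring,
      countAvoids_add r (b + 2), show b + 1 + 2 * (r + 1) = b + 2 * (r + 1) + 1 by ring, ballot,
      show b + 2 + 2 * r = b + 2 * (r + 1) by ring]

theorem motzkin_res12_eq_avoids321 (n : ℕ) (hn : 2 ≤ n) :
    Nat.card {p : List BStep // IsBMotzkin n p ∧ Res1 p ∧ Res2 p} =
      Nat.card {π : Equiv.Perm (Fin (n - 1)) // Avoids321 π} := by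
  obtain ⟨m, rfl⟩ := Nat.exists_eq_add_of_le' hn
  rw [card_restricted_motzkin, card_avoids321, show m + 2 - 1 = 0 + (m + 1) by omega,
    countAvoids_add, zero_add]
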